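/- For σ₁, σ₂ > 0 with σ₁ < σ₂, R ≥ 0 and positive integer n, the secrecy capacity under an amplitude constraint is upper bounded by the Gaussian average-power secrecy capacity: (1/2)∫_{σ₁²}^{σ₂²} (R² − R² E[h_{n/2}²(‖x_R + √s Z‖R/s)])/s² ds ≤ (n/2) log((1 + R²/σ₁²)/(1 + R²/σ₂²)), where x_R is any vector of norm R and Z ~ N(0, I_n). -/

import Mathlib

open MeasureTheory ProbabilityTheory

/-- Modified Bessel function of the first kind of order `ν`. -/
noncomputable def besselI (ν x : ℝ) : ℝ :=
  ∑' k : ℕ, (x / 2) ^ (2 * (k : ℝ) + ν) / (k.factorial * Real.Gamma ((k : ℝ) + ν + 1))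

/-- Ratio `h_ν(x) = I_ν(x) / I_{ν-1}(x)`. -/
noncomputable def besselRatio (ν x : ℝ) : ℝ := besselI ν x / besselI (ν - 1) x

/-- Standard Gaussian measure on `ℝⁿ`. -/
noncomputable def stdGaussian (n : ℕ) : Measure (Fin n → ℝ) :=
  Measure.pi fun _ => gaussianReal 0 1

/-- Euclidean norm on `Fin n → ℝ`. -/
noncomputable def euclNorm {n : ℕ} (z : Fin n → ℝ) : ℝ := Real.sqrt (∑ i, z i ^ 2)


open Filter Topology Complex in
lemma ext_of_laplace (μ ν : Measure ℝ) [IsFiniteMeasure μ] [IsFiniteMeasure ν] (a : ℝ) (ha : 0 < a)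
    (h : ∀ t < a, ∫⁻ u, ENNReal.ofReal (Real.exp (t * u)) ∂μ
      = ∫⁻ u, ENNReal.ofReal (Real.exp (t * u)) ∂ν)
    (hfin : ∀ t < a, ∫⁻ u, ENNReal.ofReal (Real.exp (t * u)) ∂ν ≠ ⊤) : μ = ν := by
  have int (ρ : Measure ℝ) (t : ℝ) (hh : ∫⁻ u, ENNReal.ofReal (Real.exp (t * u)) ∂ρ ≠ ⊤) :
      Integrable (fun u => Real.exp (t * u)) ρ := by
    refine ⟨by fun_prop, ?_⟩
    rw [hasFiniteIntegral_iff_ofReal (ae_of_all _ fun u => (Real.exp_pos _).le)]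
    exact lt_top_iff_ne_top.2 hh
  have sub (ρ : Measure ℝ) (hh : ∀ t < a, ∫⁻ u, ENNReal.ofReal (Real.exp (t * u)) ∂ρ ≠ ⊤) :
      Set.Iio a ⊆ interior (integrableExpSet id ρ) := by
    apply interior_maximal _ isOpen_Iio
    intro t ht
    exact int ρ t (hh t ht)
  have hfinμ : ∀ t < a, ∫⁻ u, ENNReal.ofReal (Real.exp (t * u)) ∂μ ≠ ⊤ := fun t ht => by
    rw [h t ht]; exact hfin t ht
  have hX : AnalyticOnNhd ℂ (complexMGF id μ) {z | z.re ∈ Set.Iio a} :=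
    analyticOnNhd_complexMGF.mono fun z hz => sub μ hfinμ hz
  have hY : AnalyticOnNhd ℂ (complexMGF id ν) {z | z.re ∈ Set.Iio a} :=
    analyticOnNhd_complexMGF.mono fun z hz => sub ν hfin hz
  have key : Set.EqOn (complexMGF id μ) (complexMGF id ν) {z | z.re ∈ Set.Iio a} := by
    refine AnalyticOnNhd.eqOn_of_preconnected_of_frequently_eq hX hY
      ((convex_Iio a).linear_preimage reLm).isPreconnected
      (z₀ := ((0:ℝ) : ℂ)) (by simpa using ha) ?_
    have h_real : ∃ᶠ (x : ℝ) in 𝓝[≠] 0, complexMGF id μ x = complexMGF id ν x := by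
      apply Eventually.frequently
      filter_upwards [nhdsWithin_le_nhds (Iio_mem_nhds ha)] with y hy
      rw [complexMGF_ofReal, complexMGF_ofReal, mgf, mgf]
      simp only [id]
      rw [integral_eq_lintegral_of_nonneg_ae (ae_of_all _ fun u => (Real.exp_pos _).le)
        (by fun_prop), integral_eq_lintegral_of_nonneg_ae
        (ae_of_all _ fun u => (Real.exp_pos _).le) (by fun_prop), h y hy]
    rw [frequently_iff_seq_forall] at h_real ⊢
    obtain ⟨xs, hx_tendsto, hx_eq⟩ := h_real
    refine ⟨fun n ↦ xs n, ?_, fun n ↦ ?_⟩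
    · rw [tendsto_nhdsWithin_iff] at hx_tendsto ⊢
      constructor
      · rw [tendsto_ofReal_iff]
        exact hx_tendsto.1
      · simpa using hx_tendsto.2
    · simp [hx_eq]
  apply Measure.ext_of_charFun
  ext t
  rw [← complexMGF_id_mul_I, ← complexMGF_id_mul_I]
  exact key (by simpa using ha)

lemma gamma_laplace (a r t : ℝ) (ha : 0 < a) (hr : 0 < r) (ht : t < r) :
    ∫⁻ u, ENNReal.ofReal (Real.exp (t * u)) ∂(gammaMeasure a r)
      = ENNReal.ofReal ((r / (r - t)) ^ a) := by
  have hrt : 0 < r - t := sub_pos.2 ht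
  have mg (r : ℝ) : Measurable (gammaPDF a r) := (measurable_gammaPDFReal a r).ennreal_ofReal
  rw [gammaMeasure, lintegral_withDensity_eq_lintegral_mul _ (mg r) (by fun_prop)]
  have : (gammaPDF a r * fun u => ENNReal.ofReal (Real.exp (t * u)))
      = fun u => ENNReal.ofReal ((r / (r - t)) ^ a) * gammaPDF a (r - t) u := by
    ext u
    simp only [Pi.mul_apply, gammaPDF]
    rw [← ENNReal.ofReal_mul (gammaPDFReal_nonneg ha hr u),
      ← ENNReal.ofReal_mul (by positivity)]
    congr 1
    simp only [gammaPDFReal]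
    split_ifs
    · rw [Real.div_rpow hr.le hrt.le]
      have e : Real.exp (-((r - t) * u)) = Real.exp (-(r * u)) * Real.exp (t * u) := by
        rw [← Real.exp_add]; ring_nf
      rw [e]
      have : (r - t) ^ a ≠ 0 := by positivity
      field_simp
    · simp
  rw [this, lintegral_const_mul _ (mg _), lintegral_gammaPDF_eq_one ha hrt, mul_one]

lemma gauss_laplace (x s t : ℝ) (hs : 0 < s) (ht : t < 1 / (2 * s)) :
    ∫⁻ z, ENNReal.ofReal (Real.exp (t * (x + Real.sqrt s * z) ^ 2)) ∂(gaussianReal 0 1)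
      = ENNReal.ofReal ((1 / (1 - 2 * t * s)) ^ (1 / 2 : ℝ) *
          Real.exp (t * x ^ 2 * (1 / (1 - 2 * t * s)))) := by
  have h1 : 0 < 1 - 2 * t * s := by
    rw [lt_div_iff₀ (by positivity)] at ht; linarith
  set w : NNReal := ⟨1 / (1 - 2 * t * s), by positivity⟩ with hw
  have hwv : (w : ℝ) = 1 / (1 - 2 * t * s) := rfl
  have hw0 : w ≠ 0 := by
    intro h
    have : (w : ℝ) = 0 := by rw [h]; rfl
    rw [hwv] at this
    have : 0 < 1 / (1 - 2 * t * s) := by positivity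
    linarith
  rw [gaussianReal_of_var_ne_zero _ one_ne_zero,
    lintegral_withDensity_eq_lintegral_mul _ (measurable_gaussianPDF 0 1) (by fun_prop)]
  set m : ℝ := 2 * t * x * Real.sqrt s * (1 / (1 - 2 * t * s)) with hm
  have : (gaussianPDF 0 1 * fun z => ENNReal.ofReal (Real.exp (t * (x + Real.sqrt s * z) ^ 2)))
      = fun z => ENNReal.ofReal ((1 / (1 - 2 * t * s)) ^ (1 / 2 : ℝ) *
          Real.exp (t * x ^ 2 * (1 / (1 - 2 * t * s)))) * gaussianPDF m w z := by
    ext z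
    simp only [Pi.mul_apply, gaussianPDF]
    rw [← ENNReal.ofReal_mul (gaussianPDFReal_nonneg _ _ _),
      ← ENNReal.ofReal_mul (by positivity)]
    congr 1
    simp only [gaussianPDFReal, hwv, NNReal.coe_one]
    rw [← Real.sqrt_eq_rpow]
    have hp := Real.pi_pos
    rw [Real.sqrt_mul (by positivity) (1 / (1 - 2 * t * s))]
    have hq : 0 < Real.sqrt (1 / (1 - 2 * t * s)) := Real.sqrt_pos.2 (by positivity)
    have e : Real.exp (-(z - 0) ^ 2 / (2 * 1)) * Real.exp (t * (x + Real.sqrt s * z) ^ 2)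
        = Real.exp (t * x ^ 2 * (1 / (1 - 2 * t * s))) *
          Real.exp (-(z - m) ^ 2 / (2 * (1 / (1 - 2 * t * s)))) := by
      rw [← Real.exp_add, ← Real.exp_add]
      congr 1
      rw [hm]
      have hss : Real.sqrt s ^ 2 = s := Real.sq_sqrt hs.le
      generalize Real.sqrt s = q at *
      subst hss
      field_simp
      ring
    rw [mul_assoc, e, mul_one]
    field_simp
  rw [this, lintegral_const_mul _ (measurable_gaussianPDF _ _), lintegral_gaussianPDF_eq_one _ hw0,
    mul_one]

lemma gaussN_laplace (n : ℕ) (x : Fin n → ℝ) (s t : ℝ) (hs : 0 < s) (ht : t < 1 / (2 * s)) :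
    ∫⁻ z, ENNReal.ofReal (Real.exp (t * ∑ i, (x i + Real.sqrt s * z i) ^ 2)) ∂(stdGaussian n)
      = ENNReal.ofReal ((1 / (1 - 2 * t * s)) ^ ((n : ℝ) / 2) *
          Real.exp (t * (∑ i, x i ^ 2) * (1 / (1 - 2 * t * s)))) := by
  have h1 : 0 < 1 - 2 * t * s := by
    rw [lt_div_iff₀ (by positivity)] at ht; linarith
  have e1 : ∀ z : Fin n → ℝ, ENNReal.ofReal (Real.exp (t * ∑ i, (x i + Real.sqrt s * z i) ^ 2))
      = ∏ i, ENNReal.ofReal (Real.exp (t * (x i + Real.sqrt s * z i) ^ 2)) := by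
    intro z
    rw [Finset.mul_sum, Real.exp_sum, ENNReal.ofReal_prod_of_nonneg]
    intro i _; positivity
  simp_rw [e1]
  have ind : iIndepFun (fun i (z : Fin n → ℝ) =>
      ENNReal.ofReal (Real.exp (t * (x i + Real.sqrt s * z i) ^ 2))) (stdGaussian n) :=
    iIndepFun_pi (X := fun i z => ENNReal.ofReal (Real.exp (t * (x i + Real.sqrt s * z) ^ 2)))
      (fun i => by fun_prop)
  rw [lintegral_prod_eq_prod_lintegral_of_indepFun _ _ ind (fun i => by fun_prop)]
  have e2 : ∀ i, ∫⁻ z, ENNReal.ofReal (Real.exp (t * (x i + Real.sqrt s * z i) ^ 2))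
      ∂(stdGaussian n) = ENNReal.ofReal ((1 / (1 - 2 * t * s)) ^ (1 / 2 : ℝ) *
          Real.exp (t * x i ^ 2 * (1 / (1 - 2 * t * s)))) := by
    intro i
    rw [← gauss_laplace (x i) s t hs ht]
    have mp := measurePreserving_eval (fun _ : Fin n => gaussianReal 0 1) i
    exact mp.lintegral_comp
      (f := fun z => ENNReal.ofReal (Real.exp (t * (x i + Real.sqrt s * z) ^ 2))) (by fun_prop)
  simp_rw [e2]
  rw [← ENNReal.ofReal_prod_of_nonneg (fun i _ => by positivity), Finset.prod_mul_distrib,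
    ← Real.exp_sum, Finset.prod_const, ← Real.rpow_natCast, ← Real.rpow_mul (by positivity),
    ← Finset.sum_mul, ← Finset.mul_sum]
  congr 3
  rw [Finset.card_univ, Fintype.card_fin]; ring

/-- Terms of the Bessel series. -/
noncomputable def bT (ν x : ℝ) (k : ℕ) : ℝ :=
  (x / 2) ^ (2 * (k : ℝ) + ν) / (k.factorial * Real.Gamma ((k : ℝ) + ν + 1))

lemma besselI_eq (ν x : ℝ) : besselI ν x = ∑' k, bT ν x k := rfl

lemma bT_nonneg (ν x : ℝ) (hν : -1 < ν) (hx : 0 ≤ x) (k : ℕ) : 0 ≤ bT ν x k := by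
  have : 0 < Real.Gamma ((k : ℝ) + ν + 1) := Real.Gamma_pos_of_pos (by
    have : (0 : ℝ) ≤ k := k.cast_nonneg
    linarith)
  unfold bT; positivity

lemma bT_pos (ν x : ℝ) (hν : -1 < ν) (hx : 0 < x) (k : ℕ) : 0 < bT ν x k := by
  have : 0 < Real.Gamma ((k : ℝ) + ν + 1) := Real.Gamma_pos_of_pos (by
    have : (0 : ℝ) ≤ k := k.cast_nonneg
    linarith)
  unfold bT; positivity

lemma bT_succ (ν x : ℝ) (hν : -1 < ν) (hx : 0 < x) (k : ℕ) :
    bT ν x (k + 1) = bT ν x k * ((x / 2) ^ 2 / (((k : ℝ) + 1) * ((k : ℝ) + ν + 1))) := by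
  have hk : (0 : ℝ) ≤ k := k.cast_nonneg
  have h0 : 0 < (k : ℝ) + ν + 1 := by linarith
  have : 0 < Real.Gamma ((k : ℝ) + ν + 1) := Real.Gamma_pos_of_pos h0
  unfold bT
  have e1 : 2 * ((k + 1 : ℕ) : ℝ) + ν = (2 * (k : ℝ) + ν) + (2 : ℕ) := by push_cast; ring
  have e2 : ((k + 1 : ℕ) : ℝ) + ν + 1 = ((k : ℝ) + ν + 1) + 1 := by push_cast; ring
  rw [e1, e2, Real.rpow_add (by positivity), Real.rpow_natCast, Real.Gamma_add_one h0.ne',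
    Nat.factorial_succ]
  push_cast
  field_simp

open Filter Topology in
lemma bT_summable (ν x : ℝ) (hν : -1 < ν) (hx : 0 < x) : Summable (bT ν x) := by
  refine summable_of_ratio_test_tendsto_lt_one (l := 0) zero_lt_one
    (Eventually.of_forall fun k => (bT_pos ν x hν hx k).ne') ?_
  have e : (fun k => ‖bT ν x (k + 1)‖ / ‖bT ν x k‖)
      = fun k : ℕ => (x / 2) ^ 2 / (((k : ℝ) + 1) * ((k : ℝ) + ν + 1)) := by
    ext k
    have hk : (0 : ℝ) ≤ k := k.cast_nonneg
    have h0 : 0 < (k : ℝ) + ν + 1 := by linarith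
    have hp := bT_pos ν x hν hx k
    rw [bT_succ ν x hν hx k, norm_mul, mul_div_cancel_left₀ _ (by simpa using hp.ne'),
      Real.norm_of_nonneg (by positivity)]
  rw [e]
  apply Tendsto.const_div_atTop
  apply Tendsto.atTop_mul_atTop₀
  · exact tendsto_atTop_add_const_right _ _ tendsto_natCast_atTop_atTop
  · exact tendsto_atTop_add_const_right _ _
      (tendsto_atTop_add_const_right _ _ tendsto_natCast_atTop_atTop)

lemma besselI_pos (ν x : ℝ) (hν : -1 < ν) (hx : 0 < x) : 0 < besselI ν x :=
  (bT_summable ν x hν hx).tsum_pos (bT_nonneg ν x hν hx.le) 0 (bT_pos ν x hν hx 0)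

lemma besselI_nonneg (ν x : ℝ) (hν : -1 < ν) (hx : 0 ≤ x) : 0 ≤ besselI ν x :=
  tsum_nonneg (bT_nonneg ν x hν hx)

lemma besselI_measurable {α : Type*} [MeasurableSpace α] (w : α → ℝ) (hw : Measurable w)
    (hw0 : ∀ a, 0 ≤ w a) (ν : ℝ) (hν : -1 < ν) : Measurable (fun a => besselI ν (w a)) := by
  have e : (fun a => besselI ν (w a)) = fun a => (∑' k, ENNReal.ofReal (bT ν (w a) k)).toReal := by
    ext a
    rw [ENNReal.tsum_toReal_eq (fun _ => ENNReal.ofReal_ne_top), besselI_eq]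
    congr 1
    ext k
    rw [ENNReal.toReal_ofReal (bT_nonneg ν _ hν (hw0 a) k)]
  rw [e]
  apply Measurable.ennreal_toReal
  apply Measurable.tsum
  intro k
  unfold bT
  fun_prop

lemma ratio_nonneg (v x : ℝ) (hv : 0 < v) (hx : 0 ≤ x) : 0 ≤ besselRatio v x :=
  div_nonneg (besselI_nonneg _ _ (by linarith) hx) (besselI_nonneg _ _ (by linarith) hx)

lemma bT_shift (v x : ℝ) (hv : 0 < v) (hx : 0 < x) (k : ℕ) :
    bT v x k = (x / 2) / (k + v) * bT (v - 1) x k := by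
  have hk : (0 : ℝ) ≤ k := k.cast_nonneg
  have h0 : 0 < (k : ℝ) + v := by linarith
  have : 0 < Real.Gamma ((k : ℝ) + v) := Real.Gamma_pos_of_pos h0
  unfold bT
  have e1 : 2 * (k : ℝ) + v = (2 * (k : ℝ) + (v - 1)) + (1 : ℕ) := by push_cast; ring
  have e2 : (k : ℝ) + (v - 1) + 1 = (k : ℝ) + v := by ring
  rw [e2, e1, Real.rpow_add (by positivity), Real.rpow_natCast, Real.Gamma_add_one h0.ne']
  field_simp

lemma ratio_le (v x : ℝ) (hv : 0 < v) (hx : 0 < x) : besselRatio v x ≤ x / (2 * v) := by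
  unfold besselRatio
  rw [div_le_iff₀ (besselI_pos _ _ (by linarith) hx), besselI_eq, besselI_eq, ← tsum_mul_left]
  refine Summable.tsum_le_tsum (fun k => ?_) (bT_summable _ _ (by linarith) hx)
    ((bT_summable _ _ (by linarith) hx).mul_left _)
  rw [bT_shift v x hv hx]
  have := bT_nonneg (v - 1) x (by linarith) hx.le k
  have hk : (0 : ℝ) ≤ k := k.cast_nonneg
  gcongr ?_ * _
  rw [div_div]
  gcongr
  linarith

/-- Poisson weights. -/
noncomputable def pw (l : ℝ) (k : ℕ) : ℝ := Real.exp (-l) * (l ^ k / k.factorial)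

lemma pw_nonneg (l : ℝ) (hl : 0 ≤ l) (k : ℕ) : 0 ≤ pw l k := by unfold pw; positivity

lemma pw_hasSum (l c : ℝ) : HasSum (fun k => pw l k * c ^ k) (Real.exp (l * (c - 1))) := by
  have h := (NormedSpace.expSeries_div_hasSum_exp (l * c)).mul_left (Real.exp (-l))
  rw [← Real.exp_eq_exp_ℝ, ← Real.exp_add] at h
  have e1 : (fun k => pw l k * c ^ k)
      = fun k : ℕ => Real.exp (-l) * ((l * c) ^ k / (k.factorial : ℝ)) := by
    funext k; unfold pw; rw [mul_pow]; ring
  have e2 : l * (c - 1) = -l + l * c := by ring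
  rw [e1, e2]; exact h

/-- Noncentral chi-squared-type law. -/
noncomputable def ncLaw (v r l : ℝ) : Measure ℝ :=
  Measure.sum fun k : ℕ => ENNReal.ofReal (pw l k) • gammaMeasure (v + k) r

lemma ncLaw_laplace (v r l t : ℝ) (hv : 0 < v) (hr : 0 < r) (hl : 0 ≤ l) (ht : t < r) :
    ∫⁻ u, ENNReal.ofReal (Real.exp (t * u)) ∂(ncLaw v r l)
      = ENNReal.ofReal ((r / (r - t)) ^ v * Real.exp (l * (r / (r - t) - 1))) := by
  have hrt : 0 < r - t := sub_pos.2 ht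
  unfold ncLaw
  rw [lintegral_sum_measure]
  have : ∀ k : ℕ, ∫⁻ u, ENNReal.ofReal (Real.exp (t * u))
        ∂(ENNReal.ofReal (pw l k) • gammaMeasure (v + k) r)
      = ENNReal.ofReal ((r / (r - t)) ^ v * (pw l k * (r / (r - t)) ^ k)) := by
    intro k
    rw [lintegral_smul_measure, gamma_laplace _ _ _ (by positivity) hr ht, smul_eq_mul,
      ← ENNReal.ofReal_mul (pw_nonneg l hl k), Real.rpow_add (by positivity), Real.rpow_natCast]
    congr 1; ring
  simp_rw [this]
  have hs := (pw_hasSum l (r / (r - t))).mul_left ((r / (r - t)) ^ v)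
  rw [← ENNReal.ofReal_tsum_of_nonneg _ hs.summable, hs.tsum_eq]
  intro k
  have := pw_nonneg l hl k
  positivity

lemma law_eq (n : ℕ) (hn : 0 < n) (x : Fin n → ℝ) (s : ℝ) (hs : 0 < s) :
    (stdGaussian n).map (fun z => ∑ i, (x i + Real.sqrt s * z i) ^ 2)
      = ncLaw ((n : ℝ) / 2) (1 / (2 * s)) ((∑ i, x i ^ 2) / (2 * s)) := by
  have hn' : (0 : ℝ) < n := by exact_mod_cast hn
  have hX : 0 ≤ ∑ i, x i ^ 2 := Finset.sum_nonneg fun i _ => sq_nonneg _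
  have hm : Measurable (fun z : Fin n → ℝ => ∑ i, (x i + Real.sqrt s * z i) ^ 2) := by fun_prop
  have : IsProbabilityMeasure (stdGaussian n : Measure (Fin n → ℝ)) := by
    unfold _root_.stdGaussian; infer_instance
  have : IsFiniteMeasure (ncLaw ((n : ℝ) / 2) (1 / (2 * s)) ((∑ i, x i ^ 2) / (2 * s))) := by
    refine ⟨?_⟩
    have := ncLaw_laplace ((n : ℝ) / 2) (1 / (2 * s)) ((∑ i, x i ^ 2) / (2 * s)) 0 (by positivity)
      (by positivity) (by positivity) (by positivity)
    simp only [zero_mul, Real.exp_zero, ENNReal.ofReal_one, lintegral_one] at this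
    rw [this]; exact ENNReal.ofReal_lt_top
  refine ext_of_laplace _ _ (1 / (2 * s)) (by positivity) (fun t ht => ?_) (fun t ht => ?_)
  · rw [lintegral_map (by fun_prop) hm, gaussN_laplace n x s t hs ht,
      ncLaw_laplace _ _ _ t (by positivity) (by positivity) (by positivity) ht]
    have h1 : 0 < 1 - 2 * t * s := by
      rw [lt_div_iff₀ (by positivity)] at ht; linarith
    have e : 1 / (2 * s) / (1 / (2 * s) - t) = 1 / (1 - 2 * t * s) := by
      have : 1 / (2 * s) - t = (1 - 2 * t * s) / (2 * s) := by field_simp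
      rw [this]; field_simp
    rw [e]
    have e' : 1 / (1 - 2 * t * s) - 1 = 2 * t * s * (1 / (1 - 2 * t * s)) := by
      field_simp; ring
    rw [e']
    congr 3
    field_simp
  · rw [ncLaw_laplace _ _ _ t (by positivity) (by positivity) (by positivity) ht]
    exact ENNReal.ofReal_ne_top

/-- Prefactor of the density. -/
noncomputable def pf (v s R u : ℝ) : ℝ :=
  Real.exp (-(R ^ 2 / (2 * s))) * (1 / (2 * s)) ^ v * u ^ (v - 1) * Real.exp (-(1 / (2 * s) * u))
    * (Real.sqrt u * R / s / 2) ^ (-(v - 1))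

lemma pf_nonneg (v s R u : ℝ) (hs : 0 < s) (hR : 0 < R) (hu : 0 < u) : 0 ≤ pf v s R u := by
  unfold pf; positivity

lemma term_eq (v s R u : ℝ) (hs : 0 < s) (hR : 0 < R) (hu : 0 < u) (k : ℕ) :
    pw (R ^ 2 / (2 * s)) k * gammaPDFReal (v + k) (1 / (2 * s)) u
      = pf v s R u * bT (v - 1) (Real.sqrt u * R / s) k := by
  set y := Real.sqrt u * R / s / 2 with hy
  have hsq : 0 < Real.sqrt u := Real.sqrt_pos.2 hu
  have hy0 : 0 < y := by positivity
  have hy2 : y ^ 2 = R ^ 2 / (2 * s) * (1 / (2 * s)) * u := by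
    rw [hy, div_pow, div_pow, mul_pow, Real.sq_sqrt hu.le]; field_simp
  have e1 : y ^ (2 * (k : ℝ) + (v - 1)) = (y ^ 2) ^ k * y ^ (v - 1) := by
    rw [Real.rpow_add hy0, Real.rpow_mul hy0.le, Real.rpow_natCast]; try norm_num
  have e2 : v + (k : ℝ) - 1 = (v - 1) + k := by ring
  have e3 : (k : ℝ) + (v - 1) + 1 = v + k := by ring
  have e4 : y ^ (-(v - 1)) * y ^ (v - 1) = 1 := by
    rw [← Real.rpow_add hy0]; simp
  unfold pf bT gammaPDFReal pw
  rw [← hy, if_pos hu.le, e1, hy2, e2, e3, Real.rpow_add hu, Real.rpow_add (by positivity),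
    Real.rpow_natCast, Real.rpow_natCast, mul_pow, mul_pow]
  calc _ = Real.exp (-(R ^ 2 / (2 * s))) * (1 / (2 * s)) ^ v * u ^ (v - 1)
        * Real.exp (-(1 / (2 * s) * u)) * (y ^ (-(v - 1)) * y ^ (v - 1)) * ((R ^ 2 / (2 * s)) ^ k * (1 / (2 * s)) ^ k * u ^ k /
          (k.factorial * Real.Gamma (v + k))) := by
        rw [e4]; simp only [div_eq_mul_inv, mul_inv]; ring
    _ = _ := by ring

lemma pf_succ (v s R u : ℝ) (hs : 0 < s) (hR : 0 < R) (hu : 0 < u) :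
    R * pf (v + 1) s R u = Real.sqrt u * pf v s R u := by
  have hsq : 0 < Real.sqrt u := Real.sqrt_pos.2 hu
  have hy0 : 0 < Real.sqrt u * R / s / 2 := by positivity
  unfold pf
  have e1 : v + 1 - 1 = (v - 1) + 1 := by ring
  have e2 : -((v - 1) + 1) = -(v - 1) + -1 := by ring
  rw [e1, e2, Real.rpow_add hu, Real.rpow_add (by positivity : 0 < 1 / (2 * s)),
    Real.rpow_add hy0, Real.rpow_neg_one, Real.rpow_one, Real.rpow_one]
  have hh : R * ((1 / (2 * s)) * u * (Real.sqrt u * R / s / 2)⁻¹) = Real.sqrt u := by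
    nth_rewrite 1 [← Real.sq_sqrt hu.le]
    field_simp
  calc _ = R * ((1 / (2 * s)) * u * (Real.sqrt u * R / s / 2)⁻¹) *
      (Real.exp (-(R ^ 2 / (2 * s))) * (1 / (2 * s)) ^ v * u ^ (v - 1) *
        Real.exp (-(1 / (2 * s) * u)) * (Real.sqrt u * R / s / 2) ^ (-(v - 1))) := by ring
    _ = _ := by rw [hh]

lemma dens_eq (v s R u : ℝ) (hv : 0 < v) (hs : 0 < s) (hR : 0 < R) (hu : 0 < u) :
    ∑' k : ℕ, ENNReal.ofReal (pw (R ^ 2 / (2 * s)) k) * gammaPDF (v + k) (1 / (2 * s)) u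
      = ENNReal.ofReal (pf v s R u * besselI (v - 1) (Real.sqrt u * R / s)) := by
  have hsq : 0 < Real.sqrt u := Real.sqrt_pos.2 hu
  have hx : 0 < Real.sqrt u * R / s := by positivity
  rw [besselI_eq, ← tsum_mul_left, ENNReal.ofReal_tsum_of_nonneg]
  · congr 1
    ext k
    rw [← term_eq v s R u hs hR hu, gammaPDF, ← ENNReal.ofReal_mul (pw_nonneg _ (by positivity) _)]
  · intro k
    exact mul_nonneg (pf_nonneg v s R u hs hR hu) (bT_nonneg _ _ (by linarith) hx.le k)
  · exact (bT_summable _ _ (by linarith) hx).mul_left _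

lemma ncLaw_lintegral (v r l : ℝ) (g : ℝ → ENNReal) (hg : Measurable g) :
    ∫⁻ u, g u ∂(ncLaw v r l)
      = ∫⁻ u, g u * ∑' k : ℕ, ENNReal.ofReal (pw l k) * gammaPDF (v + k) r u := by
  have mg (a : ℝ) : Measurable (gammaPDF a r) := (measurable_gammaPDFReal a r).ennreal_ofReal
  unfold ncLaw
  rw [lintegral_sum_measure]
  simp_rw [← ENNReal.tsum_mul_left]
  rw [lintegral_tsum (fun k => by
    have := mg (v + k)
    fun_prop)]
  congr 1
  ext k
  rw [lintegral_smul_measure, gammaMeasure, lintegral_withDensity_eq_lintegral_mul _ (mg _) hg,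
    smul_eq_mul, ← lintegral_const_mul _ ((mg _).mul hg)]
  congr 1
  ext u
  simp only [Pi.mul_apply]; ring

lemma key_lintegral (v s R : ℝ) (hv : 0 < v) (hs : 0 < s) (hR : 0 < R) :
    ∫⁻ u, ENNReal.ofReal (Real.sqrt u * besselRatio v (Real.sqrt u * R / s))
      ∂(ncLaw v (1 / (2 * s)) (R ^ 2 / (2 * s))) = ENNReal.ofReal R := by
  have hpos : ∀ u : ℝ, 0 ≤ Real.sqrt u * R / s := fun u => by positivity
  have hm : Measurable fun u : ℝ => Real.sqrt u * R / s := by fun_prop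
  have hmeas : Measurable fun u : ℝ => besselRatio v (Real.sqrt u * R / s) :=
    (besselI_measurable _ hm hpos v (by linarith)).div
      (besselI_measurable _ hm hpos (v - 1) (by linarith))
  rw [ncLaw_lintegral _ _ _ _ (by fun_prop)]
  have tot := ncLaw_lintegral (v + 1) (1 / (2 * s)) (R ^ 2 / (2 * s)) (fun _ => ENNReal.ofReal R)
    (by fun_prop)
  have one := ncLaw_laplace (v + 1) (1 / (2 * s)) (R ^ 2 / (2 * s)) 0 (by positivity)
    (by positivity) (by positivity) (by positivity)
  have e0 : 1 / (2 * s) / (1 / (2 * s) - 0) = 1 := by rw [sub_zero]; field_simp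
  simp only [zero_mul, Real.exp_zero, ENNReal.ofReal_one, lintegral_one, e0, Real.one_rpow,
    sub_self, mul_zero, mul_one] at one
  rw [lintegral_const, one, mul_one] at tot
  rw [tot]
  apply lintegral_congr_ae
  have : ∀ᵐ u : ℝ, u ≠ 0 := by simp [ae_iff]
  filter_upwards [this] with u hu
  rcases lt_or_gt_of_ne hu with h | h
  · simp [gammaPDF_of_neg h]
  · have hsq : 0 < Real.sqrt u := Real.sqrt_pos.2 h
    have hx : 0 < Real.sqrt u * R / s := by positivity
    rw [dens_eq v s R u hv hs hR h, dens_eq (v + 1) s R u (by linarith) hs hR h,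
      ← ENNReal.ofReal_mul (mul_nonneg hsq.le (ratio_nonneg v _ hv hx.le)),
      ← ENNReal.ofReal_mul hR.le, ← mul_assoc R, pf_succ v s R u hs hR h, besselRatio,
      add_sub_cancel_right]
    congr 1
    have := besselI_pos (v - 1) _ (by linarith) hx
    field_simp

lemma ratio_le' (v x : ℝ) (hv : 0 < v) (hx : 0 ≤ x) : besselRatio v x ≤ x / (2 * v) := by
  rcases hx.eq_or_lt with h | h
  · subst h
    have : besselI v 0 = 0 := by
      rw [besselI_eq]
      have : ∀ k, bT v 0 k = 0 := fun k => by
        unfold bT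
        rw [zero_div, Real.zero_rpow (by positivity), zero_div]
      simp [this]
    simp [besselRatio, this]
  · exact ratio_le v x hv h

lemma gauss_sq (x q : ℝ) : Integrable (fun z => (x + q * z) ^ 2) (gaussianReal 0 1) ∧
    ∫ z, (x + q * z) ^ 2 ∂(gaussianReal 0 1) = x ^ 2 + q ^ 2 := by
  have hm : MemLp (fun z : ℝ => z) 2 (gaussianReal 0 1) := memLp_id_gaussianReal' 2 (by simp)
  have i1 : Integrable (fun z : ℝ => z) (gaussianReal 0 1) := hm.integrable (by norm_num)
  have i2 : Integrable (fun z : ℝ => z ^ 2) (gaussianReal 0 1) := hm.integrable_sq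
  have v1 : ∫ z, z ∂(gaussianReal 0 1) = 0 := by simp
  have v2 : ∫ z, z ^ 2 ∂(gaussianReal 0 1) = 1 := by
    have := variance_fun_id_gaussianReal (μ := 0) (v := 1)
    rw [variance_of_integral_eq_zero (by fun_prop) v1] at this
    simpa using this
  have e : (fun z : ℝ => (x + q * z) ^ 2) = fun z => x ^ 2 + ((2 * x * q) * z + q ^ 2 * z ^ 2) := by
    ext z; ring
  have i3 := (i1.const_mul (2 * x * q))
  have i4 := (i2.const_mul (q ^ 2))
  have i5 : Integrable (fun z : ℝ => (2 * x * q) * z + q ^ 2 * z ^ 2) (gaussianReal 0 1) := i3.add i4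
  rw [e]
  refine ⟨(integrable_const _).add i5, ?_⟩
  rw [integral_add (integrable_const _) i5, integral_add i3 i4, integral_const_mul,
    integral_const_mul, v1, v2]
  simp

lemma gaussN_sq (n : ℕ) (x : Fin n → ℝ) (s : ℝ) (hs : 0 < s) :
    Integrable (fun z : Fin n → ℝ => ∑ i, (x i + Real.sqrt s * z i) ^ 2) (stdGaussian n) ∧
    ∫ z, ∑ i, (x i + Real.sqrt s * z i) ^ 2 ∂(stdGaussian n) = (∑ i, x i ^ 2) + n * s := by
  have mp (i : Fin n) := measurePreserving_eval (fun _ : Fin n => gaussianReal 0 1) i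
  have hi (i : Fin n) : Integrable (fun z : Fin n → ℝ => (x i + Real.sqrt s * z i) ^ 2)
      (stdGaussian n) := (mp i).integrable_comp_of_integrable (gauss_sq (x i) (Real.sqrt s)).1
  refine ⟨integrable_finsetSum _ fun i _ => hi i, ?_⟩
  rw [integral_finsetSum _ fun i _ => hi i]
  have he (i : Fin n) : ∫ z, (x i + Real.sqrt s * z i) ^ 2 ∂(stdGaussian n) = x i ^ 2 + s := by
    have h := (gauss_sq (x i) (Real.sqrt s)).2
    rw [← (mp i).map_eq, integral_map (mp i).measurable.aemeasurable (by fun_prop),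
      Real.sq_sqrt hs.le] at h
    exact h
  simp_rw [he]
  rw [Finset.sum_add_distrib]; simp

lemma mmse (n : ℕ) (hn : 0 < n) (x : Fin n → ℝ) (R s : ℝ) (hR : 0 < R) (hs : 0 < s)
    (hx : ∑ i, x i ^ 2 = R ^ 2) :
    R ^ 2 / (R ^ 2 + n * s) ≤ ∫ z, (besselRatio ((n : ℝ) / 2)
      (euclNorm (fun j => x j + Real.sqrt s * z j) * R / s)) ^ 2 ∂(stdGaussian n) := by
  have hn' : (0 : ℝ) < n := by exact_mod_cast hn
  set v : ℝ := (n : ℝ) / 2 with hvdef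
  have hv : 0 < v := by positivity
  let U : (Fin n → ℝ) → ℝ := fun z => ∑ i, (x i + Real.sqrt s * z i) ^ 2
  have hU0 : ∀ z, 0 ≤ U z := fun z => Finset.sum_nonneg fun i _ => sq_nonneg _
  have hUm : Measurable U := by unfold U; fun_prop
  let g : ℝ → ℝ := fun u => besselRatio v (Real.sqrt u * R / s)
  have hpos : ∀ u : ℝ, 0 ≤ Real.sqrt u * R / s := fun u => by positivity
  have hm : Measurable fun u : ℝ => Real.sqrt u * R / s := by fun_prop
  have hgm : Measurable g :=
    (besselI_measurable _ hm hpos v (by linarith)).div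
      (besselI_measurable _ hm hpos (v - 1) (by linarith))
  have hg0 : ∀ u, 0 ≤ g u := fun u => ratio_nonneg v _ hv (hpos u)
  set c : ℝ := R / s / (2 * v) with hc
  have hc0 : 0 ≤ c := by positivity
  have hgle : ∀ u, g u ≤ c * Real.sqrt u := fun u => by
    refine (ratio_le' v _ hv (hpos u)).trans (le_of_eq ?_)
    rw [hc]; ring
  obtain ⟨iU, eU⟩ := gaussN_sq n x s hs
  change Integrable U _ at iU
  change ∫ z, U z ∂_ = _ at eU
  have i1 : Integrable (fun z => Real.sqrt (U z) * g (U z)) (stdGaussian n) := by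
    refine (iU.const_mul c).mono' ?_ (ae_of_all _ fun z => ?_)
    · exact (hUm.sqrt.mul (hgm.comp hUm)).aestronglyMeasurable
    · rw [Real.norm_of_nonneg (mul_nonneg (Real.sqrt_nonneg _) (hg0 _))]
      calc _ ≤ Real.sqrt (U z) * (c * Real.sqrt (U z)) :=
            mul_le_mul_of_nonneg_left (hgle _) (Real.sqrt_nonneg _)
        _ = c * (Real.sqrt (U z) * Real.sqrt (U z)) := by ring
        _ = c * U z := by rw [Real.mul_self_sqrt (hU0 z)]
  have i2 : Integrable (fun z => g (U z) ^ 2) (stdGaussian n) := by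
    refine (iU.const_mul (c ^ 2)).mono' ?_ (ae_of_all _ fun z => ?_)
    · exact ((hgm.comp hUm).pow_const 2).aestronglyMeasurable
    · rw [Real.norm_of_nonneg (sq_nonneg _)]
      calc _ ≤ (c * Real.sqrt (U z)) ^ 2 := pow_le_pow_left₀ (hg0 _) (hgle _) 2
        _ = c ^ 2 * U z := by rw [mul_pow, Real.sq_sqrt (hU0 z)]
  have e1 : ∫ z, Real.sqrt (U z) * g (U z) ∂(stdGaussian n) = R := by
    rw [integral_eq_lintegral_of_nonneg_ae
      (ae_of_all _ fun z => mul_nonneg (Real.sqrt_nonneg _) (hg0 _)) i1.aestronglyMeasurable]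
    have hk := key_lintegral v s R hv hs hR
    rw [← hx, ← law_eq n hn x s hs, lintegral_map _ hUm] at hk
    · change ∫⁻ z, ENNReal.ofReal (Real.sqrt (U z) * g (U z)) ∂_ = _ at hk
      rw [hk, ENNReal.toReal_ofReal hR.le]
    · exact (Real.continuous_sqrt.measurable.mul hgm).ennreal_ofReal
  change _ ≤ ∫ z, g (U z) ^ 2 ∂(stdGaussian n)
  set d : ℝ := R / (R ^ 2 + n * s) with hd
  have hlow : ∫ z, (2 * d * (Real.sqrt (U z) * g (U z)) - d ^ 2 * U z) ∂(stdGaussian n)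
      ≤ ∫ z, g (U z) ^ 2 ∂(stdGaussian n) := by
    refine integral_mono ((i1.const_mul _).sub (iU.const_mul _)) i2 fun z => ?_
    have h1 := sq_nonneg (g (U z) - d * Real.sqrt (U z))
    have h2 := Real.sq_sqrt (hU0 z)
    simp only
    nlinarith
  rw [integral_sub (i1.const_mul _) (iU.const_mul _), integral_const_mul, integral_const_mul,
    e1, eU, hx] at hlow
  refine le_trans (le_of_eq ?_) hlow
  have : 0 < R ^ 2 + n * s := by positivity
  rw [hd]
  field_simp
  ring

theorem secrecy_capacity_le_gaussian (σ₁ σ₂ R : ℝ) (hσ₁ : 0 < σ₁) (hσ₁₂ : σ₁ < σ₂)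
    (hR : 0 ≤ R) (n : ℕ) (hn : 0 < n) (x : Fin n → ℝ) (hx : euclNorm x = R) :
    (1 / 2) * (∫ s in Set.Ioc (σ₁ ^ 2) (σ₂ ^ 2),
        (R ^ 2 - R ^ 2 * ∫ z, (besselRatio ((n : ℝ) / 2)
            (euclNorm (fun j => x j + Real.sqrt s * z j) * R / s)) ^ 2
          ∂(stdGaussian n)) / s ^ 2) ≤
      ((n : ℝ) / 2) * Real.log ((1 + R ^ 2 / σ₁ ^ 2) / (1 + R ^ 2 / σ₂ ^ 2)) := by
  have hσ₂ : 0 < σ₂ := hσ₁.trans hσ₁₂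
  have hn' : (0 : ℝ) < n := by exact_mod_cast hn
  have hsum : ∑ i, x i ^ 2 = R ^ 2 := by
    rw [← hx, euclNorm, Real.sq_sqrt (Finset.sum_nonneg fun i _ => sq_nonneg _)]
  have hab : σ₁ ^ 2 ≤ σ₂ ^ 2 := pow_le_pow_left₀ hσ₁.le hσ₁₂.le 2
  have ha : 0 < σ₁ ^ 2 := by positivity
  have hb : 0 < σ₂ ^ 2 := by positivity
  rcases hR.eq_or_lt with h0 | hR0
  · subst h0; simp
  have hlog : Real.log ((1 + R ^ 2 / σ₁ ^ 2) / (1 + R ^ 2 / σ₂ ^ 2))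
      = (Real.log (σ₂ ^ 2) - Real.log (σ₂ ^ 2 + R ^ 2))
        - (Real.log (σ₁ ^ 2) - Real.log (σ₁ ^ 2 + R ^ 2)) := by
    have e1 : 1 + R ^ 2 / σ₁ ^ 2 = (σ₁ ^ 2 + R ^ 2) / σ₁ ^ 2 := by field_simp
    have e2 : 1 + R ^ 2 / σ₂ ^ 2 = (σ₂ ^ 2 + R ^ 2) / σ₂ ^ 2 := by field_simp
    rw [e1, e2, Real.log_div (by positivity) (by positivity), Real.log_div (by positivity)
      (by positivity), Real.log_div (by positivity) (by positivity)]
    ring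
  have hne : ∀ s ∈ Set.uIcc (σ₁ ^ 2) (σ₂ ^ 2), 0 < s := fun s hs => by
    rw [Set.uIcc_of_le hab] at hs
    exact ha.trans_le hs.1
  have hcont : ContinuousOn (fun s : ℝ => s⁻¹ - (s + R ^ 2)⁻¹) (Set.uIcc (σ₁ ^ 2) (σ₂ ^ 2)) := by
    refine ContinuousOn.sub (continuousOn_id.inv₀ fun s hs => (hne s hs).ne')
      ((by fun_prop : ContinuousOn (fun s : ℝ => s + R ^ 2) _).inv₀ fun s hs => ?_)
    have := hne s hs
    positivity
  have hint : IntervalIntegrable (fun s : ℝ => s⁻¹ - (s + R ^ 2)⁻¹) volume (σ₁ ^ 2) (σ₂ ^ 2) :=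
    hcont.intervalIntegrable
  have hftc : ∫ s in Set.Ioc (σ₁ ^ 2) (σ₂ ^ 2), (s⁻¹ - (s + R ^ 2)⁻¹)
      = Real.log ((1 + R ^ 2 / σ₁ ^ 2) / (1 + R ^ 2 / σ₂ ^ 2)) := by
    rw [← intervalIntegral.integral_of_le hab, hlog]
    refine intervalIntegral.integral_eq_sub_of_hasDerivAt
      (f := fun s => Real.log s - Real.log (s + R ^ 2)) (fun s hs => ?_) hint
    have hs0 := hne s hs
    have h2 : HasDerivAt (fun s : ℝ => s + R ^ 2) 1 s := (hasDerivAt_id s).add_const _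
    have h3 := h2.log (by positivity)
    rw [one_div] at h3
    exact (Real.hasDerivAt_log hs0.ne').sub h3
  have hg_int : IntegrableOn (fun s : ℝ => (n : ℝ) * (s⁻¹ - (s + R ^ 2)⁻¹))
      (Set.Ioc (σ₁ ^ 2) (σ₂ ^ 2)) :=
    ((intervalIntegrable_iff_integrableOn_Ioc_of_le hab).1 hint).const_mul _
  have hg_nonneg : ∀ s ∈ Set.Ioc (σ₁ ^ 2) (σ₂ ^ 2), 0 ≤ (n : ℝ) * (s⁻¹ - (s + R ^ 2)⁻¹) := by
    intro s hs
    have hs0 : 0 < s := ha.trans hs.1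
    refine mul_nonneg hn'.le (sub_nonneg.2 (inv_anti₀ hs0 ?_))
    nlinarith [sq_nonneg R]
  have hG : ∫ s in Set.Ioc (σ₁ ^ 2) (σ₂ ^ 2), (n : ℝ) * (s⁻¹ - (s + R ^ 2)⁻¹)
      = n * Real.log ((1 + R ^ 2 / σ₁ ^ 2) / (1 + R ^ 2 / σ₂ ^ 2)) := by
    rw [integral_const_mul, hftc]
  have hfin : (n : ℝ) / 2 * Real.log ((1 + R ^ 2 / σ₁ ^ 2) / (1 + R ^ 2 / σ₂ ^ 2))
      = (1 / 2) * ∫ s in Set.Ioc (σ₁ ^ 2) (σ₂ ^ 2), (n : ℝ) * (s⁻¹ - (s + R ^ 2)⁻¹) := by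
    rw [hG]; ring
  rw [hfin]
  refine mul_le_mul_of_nonneg_left ?_ (by norm_num)
  by_cases hI : IntegrableOn (fun s => (R ^ 2 - R ^ 2 * ∫ z, (besselRatio ((n : ℝ) / 2)
            (euclNorm (fun j => x j + Real.sqrt s * z j) * R / s)) ^ 2
          ∂(stdGaussian n)) / s ^ 2) (Set.Ioc (σ₁ ^ 2) (σ₂ ^ 2))
  · refine setIntegral_mono_on hI hg_int measurableSet_Ioc fun s hs => ?_
    have hs0 : 0 < s := ha.trans hs.1
    have hm := mmse n hn x R s hR0 hs0 hsum
    generalize (∫ z, (besselRatio ((n : ℝ) / 2)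
            (euclNorm (fun j => x j + Real.sqrt s * z j) * R / s)) ^ 2
          ∂(stdGaussian n)) = E at hm
    have hn1 : (1 : ℝ) ≤ n := by exact_mod_cast hn
    have hR2 : 0 < R ^ 2 := by positivity
    have hd : 0 < R ^ 2 + n * s := by positivity
    calc (R ^ 2 - R ^ 2 * E) / s ^ 2 ≤ (R ^ 2 - R ^ 2 * (R ^ 2 / (R ^ 2 + n * s))) / s ^ 2 := by
          gcongr
      _ = n * (R ^ 2 / (s * (n * s + R ^ 2))) := by
          field_simp
          ring
      _ ≤ n * (R ^ 2 / (s * (s + R ^ 2))) := by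
          gcongr
          nlinarith
      _ = n * (s⁻¹ - (s + R ^ 2)⁻¹) := by
          field_simp
          ring
  · rw [integral_undef hI]
    exact setIntegral_nonneg measurableSet_Ioc hg_nonneg
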